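/- arXiv:cond-mat/0509689 — 4 statements merged into one kernel-verified Lean document; each statement's English description precedes it below -/
import Mathlib

section
/- The function f(x) = A_q (1 - β(q-1) xᵀC⁻¹x)^{1/(q-1)} on ℝⁿ, with q > 1, β = 1/(2q - n(1-q)), C a symmetric positive definite n×n matrix, and A_q = Γ(q/(q-1) + n/2) (β(q-1))^{n/2} / (Γ(q/(q-1)) π^{n/2} |C|^{1/2}), restricted to the ellipsoidal support {x : xᵀC⁻¹x ≤ 1/(β(q-1))}, is a probability density, i.e., its integral over ℝⁿ equals 1. -/
open MeasureTheory Real Matrix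

/-!
Substituting `y = S x`, where `S` is the positive square root of `A = β (q - 1) C⁻¹`, turns the
density into a constant multiple of `(1 - ‖y‖²)₊ ^ (1 / (q - 1))`, at the cost of the Jacobian
`1 / √(det A)`. In polar coordinates, with `t = ‖y‖²`, the integral of a function `f (‖y‖²)` is
`π ^ (n / 2) / Γ(n / 2)` times that of `t ^ (n / 2 - 1) f t` over `t > 0`. For the truncated power
this is a beta integral with parameters `n / 2` and `1 / (q - 1) + 1 = q / (q - 1)`; the factor
`Γ(n / 2)` cancels, and the two remaining Gamma factors are those of `A_q`.
-/

section ChangeOfVariables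

variable {E F : Type*} [NormedAddCommGroup E] [NormedSpace ℝ E] [MeasurableSpace E] [BorelSpace E]
  [FiniteDimensional ℝ E] [NormedAddCommGroup F] [NormedSpace ℝ F]

theorem integral_comp_linearMap_addHaar (μ : Measure E) [μ.IsAddHaarMeasure] {L : E →ₗ[ℝ] E}
    (hL : LinearMap.det L ≠ 0) (g : E → F) :
    ∫ x, g (L x) ∂μ = |LinearMap.det L|⁻¹ • ∫ y, g y ∂μ := by
  have hemb : MeasurableEmbedding L :=
    (LinearMap.equivOfDetNeZero L hL).toContinuousLinearEquiv.toHomeomorph.measurableEmbedding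
  rw [← hemb.integral_map g, Measure.map_linearMap_addHaar_eq_smul_addHaar μ hL,
    integral_smul_measure, ENNReal.toReal_ofReal (abs_nonneg _), abs_inv]

end ChangeOfVariables

section QuadraticForm

variable {ι E : Type*} [Fintype ι] [NormedAddCommGroup E] [NormedSpace ℝ E]

open scoped MatrixOrder in
theorem integral_comp_dotProduct_mulVec [DecidableEq ι] {A : Matrix ι ι ℝ} (hA : A.PosDef)
    (f : ℝ → E) :
    ∫ x : ι → ℝ, f (x ⬝ᵥ A *ᵥ x) = (√A.det)⁻¹ • ∫ x : ι → ℝ, f (x ⬝ᵥ x) := by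
  set S := CFC.sqrt A
  have hS : Sᵀ = S := (CFC.sqrt_nonneg A).posSemidef.isHermitian
  have hSS : S * S = A := CFC.sqrt_mul_sqrt_self A hA.posSemidef.nonneg
  have hdet : LinearMap.det (toLin' S) = √A.det := by
    rw [LinearMap.det_toLin', hA.posSemidef.det_sqrt, RCLike.sqrt_of_nonneg hA.det_pos.le]
    rfl
  have hquad (x : ι → ℝ) : x ⬝ᵥ A *ᵥ x = toLin' S x ⬝ᵥ toLin' S x := by
    rw [toLin'_apply, ← hSS, ← mulVec_mulVec, dotProduct_mulVec, ← mulVec_transpose, hS]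
  have hpos : 0 < √A.det := sqrt_pos.2 hA.det_pos
  simp_rw [hquad]
  rw [integral_comp_linearMap_addHaar volume (hdet ▸ hpos.ne') fun y ↦ f (y ⬝ᵥ y), hdet,
    abs_of_pos hpos]

theorem sqrt_det_smul_inv [DecidableEq ι] {k : ℝ} (hk : 0 ≤ k) (C : Matrix ι ι ℝ) :
    √(k • C⁻¹).det = k ^ (Fintype.card ι / 2 : ℝ) / √C.det := by
  rw [det_smul, det_nonsing_inv, Ring.inverse_eq_inv', ← div_eq_mul_inv,
    sqrt_div (by positivity), sqrt_eq_rpow (k ^ _), ← rpow_natCast_mul hk, mul_one_div]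

theorem volume_real_euclidean_unit_ball [Nonempty ι] :
    (volume : Measure (EuclideanSpace ℝ ι)).real (Metric.ball 0 1) =
      π ^ (Fintype.card ι / 2 : ℝ) / Gamma (Fintype.card ι / 2 + 1) := by
  have hpi : √π ^ Fintype.card ι = π ^ (Fintype.card ι / 2 : ℝ) := by
    rw [sqrt_eq_rpow, ← rpow_mul_natCast pi_pos.le, one_div_mul_eq_div]
  rw [Measure.real, EuclideanSpace.volume_ball, ENNReal.ofReal_one, one_pow, one_mul, hpi,
    ENNReal.toReal_ofReal (by positivity)]

theorem integral_comp_dotProduct_self [Nonempty ι] (f : ℝ → E) :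
    ∫ x : ι → ℝ, f (x ⬝ᵥ x) =
      (π ^ (Fintype.card ι / 2 : ℝ) / Gamma (Fintype.card ι / 2)) •
        ∫ t in Set.Ioi (0 : ℝ), t ^ (Fintype.card ι / 2 - 1 : ℝ) • f t := by
  set n := Fintype.card ι
  have hn : 0 < n := Fintype.card_pos
  have hnorm (x : ι → ℝ) : x ⬝ᵥ x = ‖WithLp.toLp 2 x‖ ^ 2 := by
    simp only [EuclideanSpace.real_norm_sq_eq, dotProduct, ← sq]
  have hpow {r : ℝ} (hr : 0 < r) : r * (r ^ 2) ^ (n / 2 - 1 : ℝ) = r ^ (n - 1) := by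
    rw [← rpow_natCast_mul hr.le, mul_comm r, ← rpow_add_one hr.ne', ← rpow_natCast,
      Nat.cast_sub hn]
    congr 1
    push_cast
    ring
  have hsubst : ∫ t in Set.Ioi (0 : ℝ), t ^ (n / 2 - 1 : ℝ) • f t =
      (2 : ℝ) • ∫ r in Set.Ioi (0 : ℝ), r ^ (n - 1) • f (r ^ 2) := by
    rw [← integral_comp_rpow_Ioi_of_pos two_pos, ← integral_smul]
    refine setIntegral_congr_fun measurableSet_Ioi fun r hr ↦ ?_
    norm_num [smul_smul, mul_assoc, hpow hr]
  calc ∫ x : ι → ℝ, f (x ⬝ᵥ x)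
      = ∫ x : EuclideanSpace ℝ ι, f (‖x‖ ^ 2) := by
        simp_rw [hnorm]
        exact (PiLp.volume_preserving_toLp ι).integral_comp
          (MeasurableEquiv.toLp 2 (ι → ℝ)).measurableEmbedding fun x ↦ f (‖x‖ ^ 2)
    _ = (n * (π ^ (n / 2 : ℝ) / Gamma (n / 2 + 1))) •
          ∫ r in Set.Ioi (0 : ℝ), r ^ (n - 1) • f (r ^ 2) := by
        rw [integral_fun_norm_addHaar volume fun r ↦ f (r ^ 2), finrank_euclideanSpace,
          volume_real_euclidean_unit_ball, ← Nat.cast_smul_eq_nsmul ℝ, smul_smul]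
    _ = _ := by
        rw [hsubst, smul_smul, Gamma_add_one (by positivity)]
        congr 1
        field_simp

end QuadraticForm

section Beta

open ProbabilityTheory

theorem integral_betaPDFReal {a b : ℝ} (ha : 0 < a) (hb : 0 < b) :
    ∫ t, betaPDFReal a b t = 1 := by
  have hnonneg (t : ℝ) : 0 ≤ betaPDFReal a b t := by
    by_cases ht : 0 < t ∧ t < 1
    · exact (betaPDFReal_pos ht.1 ht.2 ha hb).le
    · exact (if_neg ht).ge
  rw [integral_eq_lintegral_of_nonneg_ae (.of_forall hnonneg)
    (stronglyMeasurable_betaPDFReal a b).aestronglyMeasurable]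
  exact (congrArg ENNReal.toReal (lintegral_betaPDF_eq_one ha hb)).trans ENNReal.toReal_one

/-- The truncated power `t ↦ (1 - t)₊ ^ p`, whose compositions with positive definite quadratic
forms are the Tsallis densities up to scale. It is cut off by an indicator, since `0 ^ 0 = 1` would
otherwise leave a constant tail for `p = 0`. -/
noncomputable def truncPow (p : ℝ) : ℝ → ℝ :=
  (Set.Iic 1).indicator fun t ↦ (1 - t) ^ p

theorem integral_Ioi_rpow_mul_truncPow {a p : ℝ} (ha : 0 < a) (hp : 0 < p + 1) :
    ∫ t in Set.Ioi (0 : ℝ), t ^ (a - 1) * truncPow p t = beta a (p + 1) := by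
  have hae : ∀ᵐ t, (Set.Ioi 0).indicator (fun t ↦ t ^ (a - 1) * truncPow p t) t =
      beta a (p + 1) * betaPDFReal a (p + 1) t := by
    filter_upwards [Measure.ae_ne volume 1] with t ht
    have hbeta := (beta_pos ha hp).ne'
    simp only [betaPDFReal, truncPow, Set.indicator_apply, Set.mem_Ioi, Set.mem_Iic,
      le_iff_lt_or_eq, ht, or_false, add_sub_cancel_right]
    split_ifs <;> grind
  rw [← integral_indicator measurableSet_Ioi, integral_congr_ae hae, integral_const_mul,
    integral_betaPDFReal ha hp, mul_one]

variable {ι : Type*} [Fintype ι]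

theorem integral_truncPow_dotProduct_self {p : ℝ} (hp : 0 < p + 1) :
    ∫ x : ι → ℝ, truncPow p (x ⬝ᵥ x) =
      π ^ (Fintype.card ι / 2 : ℝ) * Gamma (p + 1) / Gamma (p + 1 + Fintype.card ι / 2) := by
  rcases isEmpty_or_nonempty ι
  · simp [truncPow, Measure.volume_pi_eq_dirac 0, (Gamma_pos_of_pos hp).ne']
  · have hn : (0 : ℝ) < Fintype.card ι / 2 := by positivity
    rw [integral_comp_dotProduct_self]
    simp_rw [smul_eq_mul]
    rw [integral_Ioi_rpow_mul_truncPow hn hp, beta, add_comm (_ / _) (p + 1)]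
    field_simp

end Beta

/-- The hypothesis `0 < q / (q - 1)` says that the exponent `1 / (q - 1)` exceeds `-1`, that is,
`q < 0` or `1 < q`. If `q < 0`, the density is unbounded near the boundary of its support, but
equal to `0` on the boundary itself, by Mathlib's convention for negative powers of `0`. -/
theorem tsallis_q_gt_one_is_density_general {ι : Type*} [Fintype ι] [DecidableEq ι] {q β Aq : ℝ}
    (hq : 0 < q / (q - 1)) (hβ : 0 < β * (q - 1)) {C : Matrix ι ι ℝ} (hC : C.PosDef)
    (hA : Aq = Gamma (q / (q - 1) + Fintype.card ι / 2) *
        (β * (q - 1)) ^ (Fintype.card ι / 2 : ℝ) /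
        (Gamma (q / (q - 1)) * π ^ (Fintype.card ι / 2 : ℝ) * √C.det)) :
    ∫ x : ι → ℝ, Set.indicator {x : ι → ℝ | x ⬝ᵥ C⁻¹ *ᵥ x ≤ 1 / (β * (q - 1))}
      (fun x ↦ Aq * (1 - β * (q - 1) * (x ⬝ᵥ C⁻¹ *ᵥ x)) ^ (1 / (q - 1))) x = 1 := by
  have hexp : q / (q - 1) = 1 / (q - 1) + 1 := by
    have : q - 1 ≠ 0 := right_ne_zero_of_mul hβ.ne'
    field_simp
    ring
  rw [hexp] at hA hq
  set k := β * (q - 1)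
  set p := 1 / (q - 1)
  have hdensity (x : ι → ℝ) : Set.indicator {x : ι → ℝ | x ⬝ᵥ C⁻¹ *ᵥ x ≤ 1 / k}
      (fun x ↦ Aq * (1 - k * (x ⬝ᵥ C⁻¹ *ᵥ x)) ^ p) x =
        Aq * truncPow p (x ⬝ᵥ (k • C⁻¹) *ᵥ x) := by
    simp [truncPow, Set.indicator_apply, smul_mulVec, le_div_iff₀' hβ, -one_div]
  have hC0 : 0 < √C.det := sqrt_pos.2 hC.det_pos
  simp_rw [hdensity]
  rw [integral_const_mul, integral_comp_dotProduct_mulVec (hC.inv.smul hβ),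
    integral_truncPow_dotProduct_self hq, sqrt_det_smul_inv hβ.le, hA, smul_eq_mul]
  field_simp

/-- For `q > 1`, the Tsallis density
`f(x) = A_q (1 - β(q-1) xᵀC⁻¹x)^{1/(q-1)}`, restricted to the ellipsoidal
support `{x : xᵀC⁻¹x ≤ 1/(β(q-1))}`, integrates to 1 over `ℝⁿ`. -/
theorem tsallis_q_gt_one_is_density (n : ℕ) (hn : 1 ≤ n) (q : ℝ) (hq : 1 < q)
    (C : Matrix (Fin n) (Fin n) ℝ) (hCsymm : C.IsSymm) (hC : C.PosDef)
    (β Aq : ℝ)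
    (hβ : β = 1 / (2 * q - n * (1 - q)))
    (hA : Aq = Real.Gamma (q / (q - 1) + n / 2) * (β * (q - 1)) ^ ((n : ℝ) / 2) /
        (Real.Gamma (q / (q - 1)) * Real.pi ^ ((n : ℝ) / 2) * Real.sqrt C.det)) :
    ∫ x : Fin n → ℝ,
      Set.indicator {x : Fin n → ℝ | x ⬝ᵥ C⁻¹.mulVec x ≤ 1 / (β * (q - 1))}
        (fun x => Aq * (1 - β * (q - 1) * (x ⬝ᵥ C⁻¹.mulVec x)) ^ (1 / (q - 1))) x = 1 := by
  have hq' : 0 < q - 1 := sub_pos.2 hq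
  have hβ' : 0 < β := by
    rw [hβ, ← neg_sub q 1, mul_neg, sub_neg_eq_add]
    positivity
  exact tsallis_q_gt_one_is_density_general (by positivity) (mul_pos hβ' hq') hC (by simpa using hA)
end

section
/- Let X be distributed according to the n-variate Tsallis density with parameter q, n/(n+2) < q < 1, and covariance C, and let m = 2/(1-q) - n. Then the random vector Y = X / √(1 + Xᵀ C⁻¹ X/(m-2)) is distributed according to the n-variate Tsallis density with parameter q* and covariance C*, where 1/(q*-1) = 1/(1-q) - n/2 - 1 and C* = C (m-2)/(m+n). -/
open MeasureTheory Real Matrix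

/-!
Put `N x = xᵀC⁻¹x / (m - 2)`, a function homogeneous of degree `2`. The radial map
`T x = (1 + N x)^(-1/2) x` satisfies `1 - N (T x) = (1 + N x)⁻¹`, so it is inverted by the same
construction applied to `-N`. By Euler's identity its derivative is a scalar plus a rank-one map
of determinant `(1 + N x)^(-(n/2 + 1))`; hence `T` transports the density `A (1 - N y)^s` on
`{N < 1}` back to `A (1 + N x)^(-(s + n/2 + 1))`. Both Tsallis densities have this form with the
same `N` and the same `A`: since `(m + n) C* = (m - 2) C`, only the common scatter matrix
`(m - 2) C` enters.
-/

section Homogeneous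

/-- Positive homogeneity of real degree `d`. Only scalars `t > 0` are tested, so that `t ^ d` is the
genuine real power. -/
def IsPosHomogeneous {E F : Type*} [SMul ℝ E] [SMul ℝ F] (d : ℝ) (f : E → F) : Prop :=
  ∀ ⦃t : ℝ⦄, 0 < t → ∀ x, f (t • x) = t ^ d • f x

theorem IsPosHomogeneous.neg {E F : Type*} [SMul ℝ E] [AddCommGroup F] [Module ℝ F] {d : ℝ}
    {f : E → F} (hf : IsPosHomogeneous d f) : IsPosHomogeneous d (-f) := fun t ht x => by
  simp only [Pi.neg_apply, hf ht, smul_neg]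

theorem IsPosHomogeneous.fderiv_apply_self {E F : Type*} [NormedAddCommGroup E] [NormedSpace ℝ E]
    [NormedAddCommGroup F] [NormedSpace ℝ F] {d : ℝ} {f : E → F} {x : E}
    (hf : IsPosHomogeneous d f) (hx : DifferentiableAt ℝ f x) : fderiv ℝ f x x = d • f x := by
  have hchain : HasDerivAt (fun t : ℝ => f (t • x)) (fderiv ℝ f x x) 1 := by
    have hline : HasDerivAt (fun t : ℝ => t • x) x 1 := by
      simpa using (hasDerivAt_id (1 : ℝ)).smul_const x
    exact HasFDerivAt.comp_hasDerivAt (1 : ℝ) (by simpa using hx.hasFDerivAt) hline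
  have hpow : HasDerivAt (fun t : ℝ => f (t • x)) (d • f x) 1 := by
    have hrpow : HasDerivAt (fun t : ℝ => t ^ d • f x) (d • f x) 1 := by
      simpa using (Real.hasDerivAt_rpow_const (p := d) (Or.inl one_ne_zero)).smul_const (f x)
    refine hrpow.congr_of_eventuallyEq ?_
    filter_upwards [lt_mem_nhds one_pos] with t ht using hf ht x
  exact hchain.unique hpow

end Homogeneous

theorem det_smul_id_add_smulRight {𝕜 V : Type*} [Field 𝕜] [AddCommGroup V] [Module 𝕜 V]
    [Module.Finite 𝕜 V] {c : 𝕜} (hc : c ≠ 0) (f : V →ₗ[𝕜] 𝕜) (v : V) :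
    LinearMap.det (c • LinearMap.id + f.smulRight v)
      = c ^ Module.finrank 𝕜 V * (1 + c⁻¹ * f v) := by
  have htransvection : c • LinearMap.id + f.smulRight v
      = c • LinearMap.transvection (c⁻¹ • f) v := by
    ext w
    simp [LinearMap.transvection.apply, smul_smul, hc]
  rw [htransvection, LinearMap.det_smul, LinearMap.transvection.det, LinearMap.smul_apply,
    smul_eq_mul]

theorem map_withDensity_abs_det_fderiv_mul_comp {E : Type*} [NormedAddCommGroup E]
    [NormedSpace ℝ E] [FiniteDimensional ℝ E] [MeasurableSpace E] [BorelSpace E] (μ : Measure E)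
    [μ.IsAddHaarMeasure] {s : Set E} {f : E → E} {f' : E → E →L[ℝ] E} (hs : MeasurableSet s)
    (hf' : ∀ x ∈ s, HasFDerivWithinAt f (f' x) s x) (hf : s.InjOn f) (g : E → ENNReal) :
    ((μ.restrict s).withDensity fun x => ENNReal.ofReal |(f' x).det| * g (f x)).map f
      = (μ.restrict (f '' s)).withDensity g := by
  have hfs : AEMeasurable f (μ.restrict s) :=
    ContinuousOn.aemeasurable (fun x hx => (hf' x hx).continuousWithinAt) hs
  ext t ht
  have hpre : NullMeasurableSet (f ⁻¹' t) (μ.restrict s) := hfs.nullMeasurableSet_preimage ht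
  rw [Measure.map_apply_of_aemeasurable (hfs.mono_ac (withDensity_absolutelyContinuous _ _)) ht,
    withDensity_apply₀ _ hpre, withDensity_apply _ ht, ← lintegral_indicator₀ hpre,
    ← lintegral_indicator ht, lintegral_image_eq_lintegral_abs_det_fderiv_mul μ hs hf' hf]
  refine lintegral_congr fun x => ?_
  by_cases hx : f x ∈ t <;> simp [hx]

section RadialRescale

/-- The radial map `x ↦ (1 + N x)^(-1/d) x` attached to a function `N` of degree `d`. It is meant
to be used where `0 < 1 + N x`; its inverse is `radialRescale d (-N)`. -/
noncomputable def radialRescale {E : Type*} [SMul ℝ E] (d : ℝ) (N : E → ℝ) (x : E) : E :=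
  (1 + N x) ^ (-d⁻¹) • x

section Module

variable {E : Type*} [AddCommGroup E] [Module ℝ E] {d : ℝ} {N : E → ℝ}

theorem IsPosHomogeneous.one_sub_apply_radialRescale (hN : IsPosHomogeneous d N) (hd : d ≠ 0)
    {x : E} (hx : 0 < 1 + N x) : 1 - N (radialRescale d N x) = (1 + N x)⁻¹ := by
  rw [radialRescale, hN (rpow_pos_of_pos hx _), ← rpow_mul hx.le, neg_mul, inv_mul_cancel₀ hd,
    rpow_neg_one, smul_eq_mul]
  field_simp
  ring

theorem IsPosHomogeneous.radialRescale_neg_radialRescale (hN : IsPosHomogeneous d N) (hd : d ≠ 0)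
    {x : E} (hx : 0 < 1 + N x) : radialRescale d (-N) (radialRescale d N x) = x := by
  have hfactor : 1 + (-N) (radialRescale d N x) = (1 + N x)⁻¹ := by
    rw [Pi.neg_apply, ← sub_eq_add_neg, hN.one_sub_apply_radialRescale hd hx]
  rw [radialRescale, hfactor, radialRescale, smul_smul, inv_rpow hx.le,
    inv_mul_cancel₀ (rpow_pos_of_pos hx _).ne', one_smul]

theorem IsPosHomogeneous.injOn_radialRescale (hN : IsPosHomogeneous d N) (hd : d ≠ 0) :
    Set.InjOn (radialRescale d N) {x | 0 < 1 + N x} :=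
  Set.LeftInvOn.injOn (f₁' := radialRescale d (-N))
    fun _ hx => hN.radialRescale_neg_radialRescale hd hx

theorem IsPosHomogeneous.image_radialRescale (hN : IsPosHomogeneous d N) (hd : d ≠ 0) :
    radialRescale d N '' {x | 0 < 1 + N x} = {y | N y < 1} := by
  ext y
  constructor
  · rintro ⟨x, hx, rfl⟩
    change N (radialRescale d N x) < 1
    rw [← sub_pos, hN.one_sub_apply_radialRescale hd hx]
    exact inv_pos.2 hx
  · intro hy
    have hy' : 0 < 1 + (-N) y := by simpa [← sub_eq_add_neg] using hy
    refine ⟨radialRescale d (-N) y, ?_, ?_⟩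
    · change 0 < 1 + N (radialRescale d (-N) y)
      rw [← sub_neg_eq_add, ← Pi.neg_apply, hN.neg.one_sub_apply_radialRescale hd hy']
      exact inv_pos.2 hy'
    · simpa using hN.neg.radialRescale_neg_radialRescale hd hy'

end Module

variable {E : Type*} [NormedAddCommGroup E] [NormedSpace ℝ E] {d : ℝ} {N : E → ℝ}

theorem hasFDerivAt_radialRescale (d : ℝ) {x : E} (hx : 0 < 1 + N x)
    (hNd : DifferentiableAt ℝ N x) :
    HasFDerivAt (radialRescale d N)
      ((1 + N x) ^ (-d⁻¹) • ContinuousLinearMap.id ℝ E +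
        ((-d⁻¹ * (1 + N x) ^ (-d⁻¹ - 1)) • fderiv ℝ N x).smulRight x) x :=
  ((hNd.hasFDerivAt.const_add 1).rpow_const (Or.inl hx.ne')).smul (hasFDerivAt_id x)

theorem IsPosHomogeneous.det_fderiv_radialRescale [FiniteDimensional ℝ E]
    (hN : IsPosHomogeneous d N) (hd : d ≠ 0) {x : E} (hx : 0 < 1 + N x)
    (hNd : DifferentiableAt ℝ N x) :
    (fderiv ℝ (radialRescale d N) x).det
      = (1 + N x) ^ (-(Module.finrank ℝ E / d + 1)) := by
  have hrankOne : 1 + ((1 + N x) ^ (-d⁻¹))⁻¹ * ((-d⁻¹ * (1 + N x) ^ (-d⁻¹ - 1)) * (d * N x))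
      = (1 + N x)⁻¹ := by
    rw [rpow_sub_one hx.ne']
    field_simp
    ring
  rw [(hasFDerivAt_radialRescale d hx hNd).fderiv, ContinuousLinearMap.det]
  calc LinearMap.det ((1 + N x) ^ (-d⁻¹) • LinearMap.id +
        ((-d⁻¹ * (1 + N x) ^ (-d⁻¹ - 1)) • (fderiv ℝ N x : E →ₗ[ℝ] ℝ)).smulRight x)
      = ((1 + N x) ^ (-d⁻¹)) ^ Module.finrank ℝ E * (1 + N x)⁻¹ := by
        rw [det_smul_id_add_smulRight (rpow_pos_of_pos hx _).ne', LinearMap.smul_apply,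
          ContinuousLinearMap.coe_coe, hN.fderiv_apply_self hNd, smul_eq_mul, smul_eq_mul,
          hrankOne]
    _ = (1 + N x) ^ (-(Module.finrank ℝ E / d + 1)) := by
        rw [← rpow_natCast, ← rpow_mul hx.le, ← rpow_neg_one (1 + N x), ← rpow_add hx]
        ring_nf

theorem IsPosHomogeneous.map_radialRescale_withDensity [FiniteDimensional ℝ E] [MeasurableSpace E]
    [BorelSpace E] (μ : Measure E) [μ.IsAddHaarMeasure] (hN : IsPosHomogeneous d N) (hd : d ≠ 0)
    (hNd : Differentiable ℝ N) (A s : ℝ) :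
    ((μ.restrict {x | 0 < 1 + N x}).withDensity fun x =>
        ENNReal.ofReal (A * (1 + N x) ^ (-(s + Module.finrank ℝ E / d + 1)))).map
      (radialRescale d N)
      = (μ.restrict {y | N y < 1}).withDensity fun y => ENNReal.ofReal (A * (1 - N y) ^ s) := by
  have hmeas : MeasurableSet {x | 0 < 1 + N x} :=
    (isOpen_lt continuous_const (continuous_const.add hNd.continuous)).measurableSet
  have hdiff : ∀ x ∈ {x | 0 < 1 + N x}, HasFDerivWithinAt (radialRescale d N)
      (fderiv ℝ (radialRescale d N) x) {x | 0 < 1 + N x} x := fun x hx =>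
    (hasFDerivAt_radialRescale d hx (hNd x)).differentiableAt.hasFDerivAt.hasFDerivWithinAt
  rw [← hN.image_radialRescale hd,
    ← map_withDensity_abs_det_fderiv_mul_comp μ hmeas hdiff (hN.injOn_radialRescale hd)]
  congr 1
  refine withDensity_congr_ae (ae_restrict_of_forall_mem hmeas fun x hx => ?_)
  have hpos : 0 < 1 + N x := hx
  beta_reduce
  rw [hN.det_fderiv_radialRescale hd hpos (hNd x), abs_of_pos (rpow_pos_of_pos hpos _),
    hN.one_sub_apply_radialRescale hd hpos, inv_rpow hpos.le, ← rpow_neg hpos.le,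
    ← ENNReal.ofReal_mul (rpow_pos_of_pos hpos _).le, mul_left_comm, ← rpow_add hpos]
  ring_nf

/-- For `s ≠ 0` the closed set `{N ≤ 1}` can be used as support, because `0 ^ s = 0`. -/
theorem IsPosHomogeneous.map_radialRescale_withDensity_of_nonneg [FiniteDimensional ℝ E]
    [MeasurableSpace E] [BorelSpace E] (μ : Measure E) [μ.IsAddHaarMeasure]
    (hN : IsPosHomogeneous d N) (hd : d ≠ 0) (hNd : Differentiable ℝ N) (hN0 : ∀ x, 0 ≤ N x)
    (A : ℝ) {s : ℝ} (hs : s ≠ 0) :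
    (μ.withDensity fun x =>
        ENNReal.ofReal (A * (1 + N x) ^ (-(s + Module.finrank ℝ E / d + 1)))).map
      (radialRescale d N)
      = μ.withDensity fun y =>
          ENNReal.ofReal (Set.indicator {y | N y ≤ 1} (fun y => A * (1 - N y) ^ s) y) := by
  have hpos : {x | 0 < 1 + N x} = Set.univ :=
    Set.eq_univ_of_forall fun x => add_pos_of_pos_of_nonneg one_pos (hN0 x)
  have hmap := hN.map_radialRescale_withDensity μ hd hNd A s
  rw [hpos, Measure.restrict_univ, ← withDensity_indicator
    (isOpen_lt hNd.continuous continuous_const).measurableSet] at hmap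
  rw [hmap]
  congr 1 with y
  rcases lt_trichotomy (N y) 1 with hy | hy | hy
  · simp [hy, hy.le]
  · simp [hy, hs]
  · simp [hy.not_gt, hy.not_ge]

end RadialRescale

section Mahalanobis

variable {ι : Type*} [Fintype ι] [DecidableEq ι]

/-- The squared Mahalanobis norm of `x` with respect to the scatter matrix `S`. It is `0` for
singular `S`, where Mathlib sets `S⁻¹ = 0`. -/
noncomputable def mahalanobisSq (S : Matrix ι ι ℝ) (x : ι → ℝ) : ℝ := x ⬝ᵥ S⁻¹ *ᵥ x

theorem mahalanobisSq_smul {c : ℝ} (hc : c ≠ 0) {S : Matrix ι ι ℝ} (hS : IsUnit S.det)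
    (x : ι → ℝ) : mahalanobisSq (c • S) x = c⁻¹ * mahalanobisSq S x := by
  have := invertibleOfNonzero hc
  rw [mahalanobisSq, Matrix.inv_smul S c hS, smul_mulVec, dotProduct_smul, invOf_eq_inv,
    smul_eq_mul, mahalanobisSq]

theorem mahalanobisSq_nonneg {S : Matrix ι ι ℝ} (hS : S.PosSemidef) (x : ι → ℝ) :
    0 ≤ mahalanobisSq S x := by
  simpa [mahalanobisSq] using hS.inv.dotProduct_mulVec_nonneg x

theorem isPosHomogeneous_mahalanobisSq (S : Matrix ι ι ℝ) :
    IsPosHomogeneous 2 (mahalanobisSq S) := fun t _ x => by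
  rw [mahalanobisSq, mulVec_smul, smul_dotProduct, dotProduct_smul, smul_smul, rpow_two, sq,
    mahalanobisSq]

theorem differentiable_mahalanobisSq (S : Matrix ι ι ℝ) : Differentiable ℝ (mahalanobisSq S) := by
  unfold mahalanobisSq mulVec dotProduct
  fun_prop

theorem radialRescale_mahalanobisSq {S : Matrix ι ι ℝ} (hS : S.PosSemidef) (x : ι → ℝ) :
    radialRescale 2 (mahalanobisSq S) x = fun i => x i / √(1 + mahalanobisSq S x) := by
  have hnonneg : 0 ≤ 1 + mahalanobisSq S x := add_nonneg zero_le_one (mahalanobisSq_nonneg hS x)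
  ext i
  rw [radialRescale, Pi.smul_apply, rpow_neg hnonneg, ← one_div 2, ← sqrt_eq_rpow, smul_eq_mul,
    inv_mul_eq_div]

theorem map_div_sqrt_one_add_mahalanobisSq {S : Matrix ι ι ℝ} (hS : S.PosSemidef) {m : ℝ}
    (hm : m ≠ 2) (A : ℝ) :
    ((volume : Measure (ι → ℝ)).withDensity fun x =>
        ENNReal.ofReal (A * (1 + mahalanobisSq S x) ^ (-((m + Fintype.card ι) / 2)))).map
      (fun x i => x i / √(1 + mahalanobisSq S x))
      = (volume : Measure (ι → ℝ)).withDensity fun y =>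
          ENNReal.ofReal (Set.indicator {y | mahalanobisSq S y ≤ 1}
            (fun y => A * (1 - mahalanobisSq S y) ^ ((m - 2) / 2)) y) := by
  have hexp : (m + Fintype.card ι) / 2
      = (m - 2) / 2 + (Module.finrank ℝ (ι → ℝ) : ℝ) / 2 + 1 := by
    rw [Module.finrank_fintype_fun_eq_card]
    ring
  rw [← funext (radialRescale_mahalanobisSq hS), hexp]
  exact (isPosHomogeneous_mahalanobisSq S).map_radialRescale_withDensity_of_nonneg volume
    two_ne_zero (differentiable_mahalanobisSq S) (mahalanobisSq_nonneg hS) A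
    (div_ne_zero (sub_ne_zero.2 hm) two_ne_zero)

theorem sqrt_det_smul {c : ℝ} (hc : 0 ≤ c) (S : Matrix ι ι ℝ) :
    √(c • S).det = c ^ ((Fintype.card ι : ℝ) / 2) * √S.det := by
  rw [det_smul, sqrt_mul (pow_nonneg hc _), sqrt_eq_rpow, ← rpow_natCast, ← rpow_mul hc,
    mul_one_div]

/-- The normalizing constant common to both Tsallis families, in terms of `m` and of the scatter
matrix `S`, that is, the multiple of the covariance for which the densities are functions of
`1 ± xᵀS⁻¹x`. -/
noncomputable def tsallisConst (m : ℝ) (S : Matrix ι ι ℝ) : ℝ :=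
  Gamma ((m + Fintype.card ι) / 2) / (Gamma (m / 2) * π ^ ((Fintype.card ι : ℝ) / 2) * √S.det)

theorem tsallisConst_smul (m : ℝ) {c : ℝ} (hc : 0 ≤ c) (S : Matrix ι ι ℝ) :
    tsallisConst m (c • S) = Gamma ((m + Fintype.card ι) / 2) * c⁻¹ ^ ((Fintype.card ι : ℝ) / 2) /
      (Gamma (m / 2) * π ^ ((Fintype.card ι : ℝ) / 2) * √S.det) := by
  rw [tsallisConst, sqrt_det_smul hc, inv_rpow hc]
  simp only [div_eq_mul_inv, mul_inv]
  ring

end Mahalanobis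

section Tsallis

/-- The scale parameter `β` of the `n`-variate Tsallis density with parameter `q`; the formula is
the same for `q < 1` and `q > 1`. -/
noncomputable def tsallisBeta (n q : ℝ) : ℝ := 1 / (2 * q - n * (1 - q))

theorem tsallisBeta_mul_sub_one (n : ℝ) {q : ℝ} (hq : q ≠ 1) :
    tsallisBeta n q * (q - 1) = (2 * (1 / (q - 1)) + n + 2)⁻¹ := by
  have hq' : q - 1 ≠ 0 := sub_ne_zero.2 hq
  have hfactor : 2 * q - n * (1 - q) = (q - 1) * (2 * (1 / (q - 1)) + n + 2) := by
    field_simp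
    ring
  rw [tsallisBeta, hfactor, one_div, mul_inv, mul_right_comm, inv_mul_cancel₀ hq', one_mul]

theorem two_lt_two_div_one_sub_sub {n q : ℝ} (hn : 0 < n + 2) (hq1 : n / (n + 2) < q)
    (hq2 : q < 1) : 2 < 2 / (1 - q) - n := by
  rw [div_lt_iff₀ hn] at hq1
  rw [lt_sub_iff_add_lt, lt_div_iff₀ (sub_pos.2 hq2)]
  linarith

variable {ι : Type*} [Fintype ι] [DecidableEq ι]

/-- The heavy-tailed Tsallis density with parameter `q < 1` and covariance `C`. -/
noncomputable def tsallisHeavyDensity (q : ℝ) (C : Matrix ι ι ℝ) (x : ι → ℝ) : ℝ :=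
  Gamma (1 / (1 - q)) * (tsallisBeta (Fintype.card ι) q * (1 - q)) ^ ((Fintype.card ι : ℝ) / 2) /
      (Gamma (1 / (1 - q) - Fintype.card ι / 2) * π ^ ((Fintype.card ι : ℝ) / 2) * √C.det) *
    (1 - tsallisBeta (Fintype.card ι) q * (q - 1) * mahalanobisSq C x) ^ (1 / (q - 1))

/-- The compactly supported Tsallis density with parameter `q > 1` and covariance `C`. -/
noncomputable def tsallisCompactDensity (q : ℝ) (C : Matrix ι ι ℝ) : (ι → ℝ) → ℝ :=
  Set.indicator {y | mahalanobisSq C y ≤ 1 / (tsallisBeta (Fintype.card ι) q * (q - 1))} fun y =>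
    Gamma (q / (q - 1) + Fintype.card ι / 2) *
        (tsallisBeta (Fintype.card ι) q * (q - 1)) ^ ((Fintype.card ι : ℝ) / 2) /
        (Gamma (q / (q - 1)) * π ^ ((Fintype.card ι : ℝ) / 2) * √C.det) *
      (1 - tsallisBeta (Fintype.card ι) q * (q - 1) * mahalanobisSq C y) ^ (1 / (q - 1))

theorem tsallisHeavyDensity_eq {q m : ℝ} (hq : q ≠ 1) (hm : m = 2 / (1 - q) - Fintype.card ι)
    (hm2 : 2 < m) {C : Matrix ι ι ℝ} (hC : IsUnit C.det) (x : ι → ℝ) :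
    tsallisHeavyDensity q C x = tsallisConst m ((m - 2) • C) *
      (1 + mahalanobisSq ((m - 2) • C) x) ^ (-((m + Fintype.card ι) / 2)) := by
  have hκ : 1 / (1 - q) = (m + Fintype.card ι) / 2 := by rw [hm]; ring
  have hκ' : 1 / (q - 1) = -((m + Fintype.card ι) / 2) := by
    rw [← hκ, ← neg_sub, one_div_neg_eq_neg_one_div]
  have hβ : tsallisBeta (Fintype.card ι) q * (q - 1) = -(m - 2)⁻¹ := by
    rw [tsallisBeta_mul_sub_one _ hq, hκ', ← inv_neg]
    ring_nf
  have hβ' : tsallisBeta (Fintype.card ι) q * (1 - q) = (m - 2)⁻¹ := by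
    rw [← neg_sub, mul_neg, hβ, neg_neg]
  rw [tsallisHeavyDensity, hκ, hκ', hβ, hβ', tsallisConst_smul m (sub_pos.2 hm2).le,
    mahalanobisSq_smul (sub_pos.2 hm2).ne' hC, neg_mul, sub_neg_eq_add, add_div,
    add_sub_cancel_right]

theorem tsallisCompactDensity_eq {q m : ℝ} (hq : q ≠ 1) (hκ : 1 / (q - 1) = (m - 2) / 2)
    (hm : 0 < m + Fintype.card ι) {C : Matrix ι ι ℝ} (hC : IsUnit C.det) :
    tsallisCompactDensity q C =
      Set.indicator {y | mahalanobisSq ((m + Fintype.card ι) • C) y ≤ 1} fun y =>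
        tsallisConst m ((m + Fintype.card ι) • C) *
          (1 - mahalanobisSq ((m + Fintype.card ι) • C) y) ^ ((m - 2) / 2) := by
  have hβ : tsallisBeta (Fintype.card ι) q * (q - 1) = (m + Fintype.card ι)⁻¹ := by
    rw [tsallisBeta_mul_sub_one _ hq, hκ]
    ring_nf
  have hq' : q / (q - 1) = m / 2 := by
    rw [← sub_add_cancel (m / 2) 1, ← sub_eq_iff_eq_add, div_sub_one (sub_ne_zero.2 hq),
      sub_sub_cancel, hκ, sub_div, div_self two_ne_zero]
  simp only [tsallisCompactDensity, hβ, hq', hκ, le_div_iff₀' (inv_pos.2 hm),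
    ← mahalanobisSq_smul hm.ne' hC, tsallisConst_smul m hm.le, add_div]

end Tsallis

/-- Duality: if `X` is Tsallis with parameter `n/(n+2) < q < 1` and covariance `C`,
and `m = 2/(1-q) - n`, then `Y = X/√(1 + XᵀC⁻¹X/(m-2))` is Tsallis with parameter
`q*` given by `1/(q*-1) = 1/(1-q) - n/2 - 1` and covariance `C* = C (m-2)/(m+n)`. -/
theorem tsallis_duality (n : ℕ) (hn : 1 ≤ n) (q : ℝ)
    (hq1 : (n : ℝ) / (n + 2) < q) (hq2 : q < 1)
    (C : Matrix (Fin n) (Fin n) ℝ) (hCsymm : C.IsSymm) (hC : C.PosDef)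
    (m β Aq : ℝ) (hm : m = 2 / (1 - q) - n)
    (hβ : β = 1 / (2 * q - n * (1 - q)))
    (hA : Aq = Real.Gamma (1 / (1 - q)) * (β * (1 - q)) ^ ((n : ℝ) / 2) /
        (Real.Gamma (1 / (1 - q) - n / 2) * Real.pi ^ ((n : ℝ) / 2) * Real.sqrt C.det))
    -- the dual parameters
    (qs : ℝ) (hqs : 1 / (qs - 1) = 1 / (1 - q) - n / 2 - 1)
    (Cs : Matrix (Fin n) (Fin n) ℝ) (hCs : Cs = ((m - 2) / (m + n)) • C)
    (βs As : ℝ) (hβs : βs = 1 / (2 * qs - n * (1 - qs)))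
    (hAs : As = Real.Gamma (qs / (qs - 1) + n / 2) * (βs * (qs - 1)) ^ ((n : ℝ) / 2) /
        (Real.Gamma (qs / (qs - 1)) * Real.pi ^ ((n : ℝ) / 2) * Real.sqrt Cs.det))
    -- the law of `X`
    (μX : Measure (Fin n → ℝ))
    (hμX : μX = (volume : Measure (Fin n → ℝ)).withDensity fun x =>
        ENNReal.ofReal (Aq * (1 - β * (q - 1) * (x ⬝ᵥ C⁻¹.mulVec x)) ^ (1 / (q - 1)))) :
    μX.map (fun x : Fin n → ℝ => fun i =>
        x i / Real.sqrt (1 + (x ⬝ᵥ C⁻¹.mulVec x) / (m - 2)))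
      = (volume : Measure (Fin n → ℝ)).withDensity fun y =>
          ENNReal.ofReal (Set.indicator
            {y : Fin n → ℝ | y ⬝ᵥ Cs⁻¹.mulVec y ≤ 1 / (βs * (qs - 1))}
            (fun y => As * (1 - βs * (qs - 1) * (y ⬝ᵥ Cs⁻¹.mulVec y)) ^ (1 / (qs - 1))) y) := by
  have hm2 : 2 < m := hm ▸ two_lt_two_div_one_sub_sub (by positivity) hq1 hq2
  have hm2' : 0 < m - 2 := sub_pos.2 hm2
  have hmn : 0 < m + n := by positivity
  have hκ : 1 / (qs - 1) = (m - 2) / 2 := by rw [hqs, hm]; ring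
  have hqs1 : qs ≠ 1 := fun h => by rw [h, sub_self, div_zero] at hκ; linarith
  have hCdet : IsUnit C.det := hC.det_pos.ne'.isUnit
  have hCsdet : IsUnit Cs.det := (hCs ▸ hC.smul (div_pos hm2' hmn)).det_pos.ne'.isUnit
  have hscatter : (m + n) • Cs = (m - 2) • C := by
    rw [hCs, smul_smul, mul_div_cancel₀ _ hmn.ne']
  have hcard : (n : ℝ) = Fintype.card (Fin n) := by rw [Fintype.card_fin]
  rw [hcard] at hm hmn hscatter
  have hX := tsallisHeavyDensity_eq hq2.ne hm hm2 hCdet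
  have hY := tsallisCompactDensity_eq hqs1 hκ hmn hCsdet
  have hdual := map_div_sqrt_one_add_mahalanobisSq (hC.posSemidef.smul hm2'.le) hm2.ne'
    (tsallisConst m ((m - 2) • C))
  rw [hscatter] at hY
  simp only [← hX, ← hY] at hdual
  simp only [mahalanobisSq_smul hm2'.ne' hCdet, ← div_eq_inv_mul] at hdual
  simpa only [hμX, hA, hAs, hβ, hβs, tsallisHeavyDensity, tsallisCompactDensity, tsallisBeta,
    mahalanobisSq, Fintype.card_fin] using hdual
end

section
/- Let q* > 1, m = 2q*/(q*-1), and C symmetric positive definite. Then Y = √(m+n) C^{1/2} N / √(a + NᵀN), where N is an n-variate standard Gaussian and a is an independent chi-square variable with m degrees of freedom, is distributed according to the n-variate Tsallis density with parameter q* and covariance matrix C. -/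
open MeasureTheory Real Matrix

open scoped ENNReal

/-!
Put `S = a + NᵀN` and `U = N / √S`. The change of variables `(x, t) = (√s u, s (1 - uᵀu))` has
Jacobian `s ^ (n / 2)`, and it turns the joint density of `(N, a)` into a product: a function of
`u` proportional to `(1 - uᵀu) ^ (m / 2 - 1)` times the chi-square density with `m + n` degrees of
freedom in `s`. So `U` and `S` are independent, `U` has the Pearson type II law on the unit ball,
and `Y = √(m + n) C^{1/2} U` is a linear image of `U`.
-/

variable {ι : Type*} [Fintype ι]

/-- The density of the standard Gaussian law on `ι → ℝ`. -/
noncomputable def stdGaussianPDF (x : ι → ℝ) : ℝ :=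
  (2 * π) ^ (-(Fintype.card ι : ℝ) / 2) * exp (-(∑ i, x i ^ 2) / 2)

/-- The standard Gaussian law on `ι → ℝ`, encoded by its density with respect to Lebesgue measure. -/
noncomputable def stdGaussianMeasure (ι : Type*) [Fintype ι] : Measure (ι → ℝ) :=
  volume.withDensity fun x => ENNReal.ofReal (stdGaussianPDF x)

/-- The density of the chi-square law with `m` degrees of freedom; `m` need not be an integer. -/
noncomputable def chiSquaredPDF (m t : ℝ) : ℝ :=
  (Set.Ioi 0).indicator (fun t => t ^ (m / 2 - 1) * exp (-t / 2) / (2 ^ (m / 2) * Gamma (m / 2))) t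

/-- The chi-square law with `m` degrees of freedom. -/
noncomputable def chiSquaredMeasure (m : ℝ) : Measure ℝ :=
  volume.withDensity fun t => ENNReal.ofReal (chiSquaredPDF m t)

/-- The density of the Pearson type II law on the unit ball of `ι → ℝ`, the law of `N / √(a + NᵀN)`.
The ball is open because for `m = 2` the formula gives `0 ^ 0 = 1` on the sphere, where
`chiSquaredPDF m (s * (1 - uᵀu))` is `0`. -/
noncomputable def pearsonTypeIIPDF (m : ℝ) (u : ι → ℝ) : ℝ :=
  {u : ι → ℝ | ∑ i, u i ^ 2 < 1}.indicator
    (fun u => Gamma (m / 2 + Fintype.card ι / 2) /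
        (Gamma (m / 2) * π ^ ((Fintype.card ι : ℝ) / 2)) *
      (1 - ∑ i, u i ^ 2) ^ (m / 2 - 1)) u

/-- The Pearson type II law on the unit ball of `ι → ℝ`. -/
noncomputable def pearsonTypeIIMeasure (ι : Type*) [Fintype ι] (m : ℝ) : Measure (ι → ℝ) :=
  volume.withDensity fun u => ENNReal.ofReal (pearsonTypeIIPDF m u)

/-- The scale parameter `β` of the Tsallis density with parameter `q` in dimension `d`. -/
noncomputable def tsallisScale (q d : ℝ) : ℝ :=
  1 / (2 * q - d * (1 - q))

/-- The Tsallis density with parameter `q` and covariance `C`. The positive part is encoded by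
restricting to the ellipsoid on which its argument is nonnegative. -/
noncomputable def tsallisPDF [DecidableEq ι] (q : ℝ) (C : Matrix ι ι ℝ) (y : ι → ℝ) : ℝ :=
  {y : ι → ℝ | y ⬝ᵥ C⁻¹ *ᵥ y ≤ 1 / (tsallisScale q (Fintype.card ι) * (q - 1))}.indicator
    (fun y => Gamma (q / (q - 1) + Fintype.card ι / 2) *
        (tsallisScale q (Fintype.card ι) * (q - 1)) ^ ((Fintype.card ι : ℝ) / 2) /
        (Gamma (q / (q - 1)) * π ^ ((Fintype.card ι : ℝ) / 2) * √C.det) *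
      (1 - tsallisScale q (Fintype.card ι) * (q - 1) * (y ⬝ᵥ C⁻¹ *ᵥ y)) ^ (1 / (q - 1))) y

/-- The Tsallis law with parameter `q` and covariance `C`. -/
noncomputable def tsallisMeasure [DecidableEq ι] (q : ℝ) (C : Matrix ι ι ℝ) : Measure (ι → ℝ) :=
  volume.withDensity fun y => ENNReal.ofReal (tsallisPDF q C y)

/-- The map `(x, t) ↦ (x / √s, s)` with `s = t + xᵀx`, taking `(N, a)` to the independent pair
`(U, S)`. -/
noncomputable def radialSplit (p : (ι → ℝ) × ℝ) : (ι → ℝ) × ℝ :=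
  ((√(p.2 + ∑ i, p.1 i ^ 2))⁻¹ • p.1, p.2 + ∑ i, p.1 i ^ 2)

theorem sum_sq_smul (c : ℝ) (x : ι → ℝ) : ∑ i, (c • x) i ^ 2 = c ^ 2 * ∑ i, x i ^ 2 := by
  simp only [Pi.smul_apply, smul_eq_mul, mul_pow, Finset.mul_sum]

theorem sum_sq_inv_mulVec [DecidableEq ι] (R : Matrix ι ι ℝ) (y : ι → ℝ) :
    ∑ i, (R⁻¹ *ᵥ y) i ^ 2 = y ⬝ᵥ (R * Rᵀ)⁻¹ *ᵥ y := by
  rw [Matrix.mul_inv_rev, ← transpose_nonsing_inv, ← mulVec_mulVec, dotProduct_mulVec,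
    vecMul_transpose]
  simp only [dotProduct, sq]

theorem measurable_mulVec (A : Matrix ι ι ℝ) : Measurable (A *ᵥ ·) :=
  (continuous_const.matrix_mulVec continuous_id).measurable

@[fun_prop]
theorem measurable_stdGaussianPDF : Measurable (stdGaussianPDF (ι := ι)) := by
  unfold stdGaussianPDF
  fun_prop

@[fun_prop]
theorem measurable_chiSquaredPDF (m : ℝ) : Measurable (chiSquaredPDF m) :=
  Measurable.indicator (by fun_prop) measurableSet_Ioi

@[fun_prop]
theorem measurable_pearsonTypeIIPDF (m : ℝ) : Measurable (pearsonTypeIIPDF (ι := ι) m) :=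
  Measurable.indicator (by fun_prop) (measurableSet_lt (by fun_prop) measurable_const)

@[fun_prop]
theorem measurable_radialSplit : Measurable (radialSplit (ι := ι)) := by
  unfold radialSplit
  fun_prop

theorem stdGaussianPDF_nonneg (x : ι → ℝ) : 0 ≤ stdGaussianPDF x := by
  unfold stdGaussianPDF
  positivity

theorem pearsonTypeIIPDF_nonneg {m : ℝ} (hm : 0 < m) (u : ι → ℝ) : 0 ≤ pearsonTypeIIPDF m u :=
  Set.indicator_nonneg
    (fun _ hu => mul_nonneg (by positivity) (rpow_nonneg (sub_nonneg.2 (le_of_lt hu)) _)) u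

theorem chiSquaredPDF_of_pos (m : ℝ) {t : ℝ} (ht : 0 < t) :
    chiSquaredPDF m t = t ^ (m / 2 - 1) * exp (-t / 2) / (2 ^ (m / 2) * Gamma (m / 2)) :=
  Set.indicator_of_mem (Set.mem_Ioi.2 ht) _

theorem chiSquaredPDF_of_nonpos (m : ℝ) {t : ℝ} (ht : t ≤ 0) : chiSquaredPDF m t = 0 :=
  Set.indicator_of_notMem (Set.notMem_Ioi.2 ht) _

theorem chiSquaredMeasure_eq_gammaMeasure (m : ℝ) :
    chiSquaredMeasure m = ProbabilityTheory.gammaMeasure (m / 2) (1 / 2) := by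
  refine withDensity_congr_ae ?_
  filter_upwards [compl_mem_ae_iff.2 (measure_singleton (0 : ℝ))] with t ht
  rcases lt_or_gt_of_ne ht with ht | ht
  · rw [chiSquaredPDF_of_nonpos m ht.le, ProbabilityTheory.gammaPDF_of_neg ht, ENNReal.ofReal_zero]
  · rw [chiSquaredPDF_of_pos m ht, ProbabilityTheory.gammaPDF_of_nonneg ht.le,
      one_div, inv_rpow zero_le_two]
    ring_nf

theorem isProbabilityMeasure_chiSquaredMeasure {m : ℝ} (hm : 0 < m) :
    IsProbabilityMeasure (chiSquaredMeasure m) := by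
  rw [chiSquaredMeasure_eq_gammaMeasure]
  exact ProbabilityTheory.isProbabilityMeasure_gammaMeasure (half_pos hm) one_half_pos

theorem lintegral_eq_mul_lintegral_smul {E : Type*} [NormedAddCommGroup E] [NormedSpace ℝ E]
    [MeasurableSpace E] [BorelSpace E] [FiniteDimensional ℝ E] (μ : Measure E)
    [μ.IsAddHaarMeasure] {r : ℝ} (hr : 0 < r) (f : E → ℝ≥0∞) :
    ∫⁻ x, f x ∂μ = ENNReal.ofReal (r ^ Module.finrank ℝ E) * ∫⁻ x, f (r • x) ∂μ := by
  have hpow : 0 < r ^ Module.finrank ℝ E := by positivity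
  rw [← (measurableEmbedding_const_smul₀ hr.ne').lintegral_map, Measure.map_addHaar_smul μ hr.ne',
    lintegral_smul_measure, smul_eq_mul, ← mul_assoc, ← ENNReal.ofReal_mul hpow.le, abs_inv,
    abs_of_pos hpow, mul_inv_cancel₀ hpow.ne', ENNReal.ofReal_one, one_mul]

theorem map_mulVec_withDensity [DecidableEq ι] {M : Matrix ι ι ℝ} (hM : M.det ≠ 0)
    {f : (ι → ℝ) → ℝ≥0∞} (hf : Measurable f) :
    (volume.withDensity f).map (M *ᵥ ·) =
      volume.withDensity fun y => ENNReal.ofReal |M.det⁻¹| * f (M⁻¹ *ᵥ y) := by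
  have hvol : volume.map (M *ᵥ ·) = ENNReal.ofReal |M.det⁻¹| • (volume : Measure (ι → ℝ)) :=
    map_matrix_volume_pi_eq_smul_volume_pi hM
  have hinv (x : ι → ℝ) : M⁻¹ *ᵥ (M *ᵥ x) = x := by
    rw [mulVec_mulVec, nonsing_inv_mul _ hM.isUnit, one_mulVec]
  ext s hs
  calc (volume.withDensity f).map (M *ᵥ ·) s
      = ∫⁻ x in (M *ᵥ ·) ⁻¹' s, f (M⁻¹ *ᵥ (M *ᵥ x)) := by
        simp_rw [hinv]
        rw [Measure.map_apply (measurable_mulVec M) hs,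
          withDensity_apply _ (measurable_mulVec M hs)]
    _ = ∫⁻ y in s, f (M⁻¹ *ᵥ y) ∂volume.map (M *ᵥ ·) :=
        (setLIntegral_map hs (hf.comp (measurable_mulVec M⁻¹)) (measurable_mulVec M)).symm
    _ = volume.withDensity (fun y => ENNReal.ofReal |M.det⁻¹| * f (M⁻¹ *ᵥ y)) s := by
        rw [hvol, Measure.restrict_smul, lintegral_smul_measure, smul_eq_mul,
          withDensity_apply _ hs]
        exact (lintegral_const_mul _ (hf.comp (measurable_mulVec M⁻¹))).symm

theorem radialSplit_sqrt_smul {s : ℝ} (hs : 0 < s) (u : ι → ℝ) :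
    radialSplit (√s • u, s * (1 - ∑ i, u i ^ 2)) = (u, s) := by
  have hsum : s * (1 - ∑ i, u i ^ 2) + ∑ i, (√s • u) i ^ 2 = s := by
    rw [sum_sq_smul, sq_sqrt hs.le]
    ring
  rw [radialSplit, hsum, inv_smul_smul₀ (sqrt_pos.2 hs).ne']

theorem lintegral_eq_lintegral_sqrt_smul {f : (ι → ℝ) × ℝ → ℝ≥0∞} (hf : Measurable f)
    (hf_zero : ∀ p, p.2 ≤ 0 → f p = 0) :
    ∫⁻ p, f p = ∫⁻ s in Set.Ioi (0 : ℝ), ∫⁻ u : ι → ℝ,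
      ENNReal.ofReal (s ^ ((Fintype.card ι : ℝ) / 2)) * f (√s • u, s * (1 - ∑ i, u i ^ 2)) := by
  have hshear : ∫⁻ p, f p = ∫⁻ s : ℝ, ∫⁻ x : ι → ℝ, f (x, s - ∑ i, x i ^ 2) := by
    rw [Measure.volume_eq_prod, lintegral_prod _ hf.aemeasurable, lintegral_lintegral_swap
      (f := fun (s : ℝ) (x : ι → ℝ) => f (x, s - ∑ i, x i ^ 2)) (by fun_prop)]
    exact lintegral_congr fun x =>
      (lintegral_sub_right_eq_self (fun t => f (x, t)) (∑ i, x i ^ 2)).symm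
  have hsupport : (Function.support fun s : ℝ => ∫⁻ x : ι → ℝ, f (x, s - ∑ i, x i ^ 2)) ⊆
      Set.Ioi 0 := by
    refine Function.support_subset_iff'.2 fun s hs => lintegral_eq_zero_of_ae_eq_zero ?_
    exact .of_forall fun x => hf_zero _
      (sub_nonpos.2 ((Set.notMem_Ioi.1 hs).trans (Finset.sum_nonneg fun i _ => sq_nonneg (x i))))
  rw [hshear, ← setLIntegral_eq_of_support_subset hsupport]
  refine setLIntegral_congr_fun measurableSet_Ioi fun s (hs : 0 < s) => ?_
  have hpow : √s ^ Fintype.card ι = s ^ ((Fintype.card ι : ℝ) / 2) := by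
    rw [sqrt_eq_rpow, ← rpow_mul_natCast hs.le, one_div_mul_eq_div]
  rw [lintegral_eq_mul_lintegral_smul volume (sqrt_pos.2 hs), lintegral_const_mul _ (by fun_prop),
    Module.finrank_fintype_fun_eq_card, hpow]
  simp_rw [sum_sq_smul, sq_sqrt hs.le, mul_sub, mul_one]

theorem rpow_mul_stdGaussianPDF_mul_chiSquaredPDF {m s : ℝ} (hm : 0 < m) (hs : 0 < s)
    (u : ι → ℝ) :
    s ^ ((Fintype.card ι : ℝ) / 2) *
        (stdGaussianPDF (√s • u) * chiSquaredPDF m (s * (1 - ∑ i, u i ^ 2))) =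
      pearsonTypeIIPDF m u * chiSquaredPDF (m + Fintype.card ι) s := by
  rw [stdGaussianPDF, sum_sq_smul, sq_sqrt hs.le, pearsonTypeIIPDF]
  set r := ∑ i, u i ^ 2 with hr
  by_cases hu : r < 1
  · have hu' : 0 < 1 - r := sub_pos.2 hu
    have hexp : exp (-s / 2) = exp (-(s * r) / 2) * exp (-(s * (1 - r)) / 2) := by
      rw [← exp_add]
      ring_nf
    have hspow : s ^ ((m + Fintype.card ι) / 2 - 1) =
        s ^ ((Fintype.card ι : ℝ) / 2) * s ^ (m / 2 - 1) := by
      rw [← rpow_add hs]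
      ring_nf
    have hGamma : Gamma (m / 2 + Fintype.card ι / 2) ≠ 0 := (Gamma_pos_of_pos (by positivity)).ne'
    rw [chiSquaredPDF_of_pos m (mul_pos hs hu'), chiSquaredPDF_of_pos _ hs,
      Set.indicator_of_mem (by exact hu), ← hr, hexp, hspow, mul_rpow hs.le hu'.le, add_div,
      rpow_add two_pos, neg_div, rpow_neg (by positivity), mul_rpow zero_le_two pi_nonneg]
    field_simp [hGamma]
  · rw [chiSquaredPDF_of_nonpos m (mul_nonpos_of_nonneg_of_nonpos hs.le (by linarith)),
      Set.indicator_of_notMem (by exact hu), mul_zero, mul_zero, zero_mul]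

theorem lintegral_withDensity_prod_withDensity {α β : Type*} [MeasurableSpace α]
    [MeasurableSpace β] {μ : Measure α} {ν : Measure β} [SFinite μ] [SFinite ν]
    {f : α → ℝ≥0∞} {g : β → ℝ≥0∞} (hf : Measurable f) (hg : Measurable g)
    {F : α × β → ℝ≥0∞} (hF : Measurable F) :
    ∫⁻ p, F p ∂(μ.withDensity f).prod (ν.withDensity g) =
      ∫⁻ p, f p.1 * g p.2 * F p ∂μ.prod ν := by
  rw [prod_withDensity hf hg, lintegral_withDensity_eq_lintegral_mul _ (by fun_prop) hF]
  simp only [Pi.mul_apply]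

theorem map_radialSplit_stdGaussianMeasure_prod_chiSquaredMeasure {m : ℝ} (hm : 0 < m) :
    ((stdGaussianMeasure ι).prod (chiSquaredMeasure m)).map radialSplit =
      (pearsonTypeIIMeasure ι m).prod (chiSquaredMeasure (m + Fintype.card ι)) := by
  refine Measure.ext_of_lintegral _ fun F hF => ?_
  have hdensity (s : ℝ) (hs : 0 < s) (u : ι → ℝ) :
      ENNReal.ofReal (s ^ ((Fintype.card ι : ℝ) / 2)) *
          (ENNReal.ofReal (stdGaussianPDF (√s • u)) *
            ENNReal.ofReal (chiSquaredPDF m (s * (1 - ∑ i, u i ^ 2))) *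
            F (radialSplit (√s • u, s * (1 - ∑ i, u i ^ 2)))) =
        ENNReal.ofReal (pearsonTypeIIPDF m u) *
          ENNReal.ofReal (chiSquaredPDF (m + Fintype.card ι) s) * F (u, s) := by
    rw [radialSplit_sqrt_smul hs, ← mul_assoc, ← ENNReal.ofReal_mul (stdGaussianPDF_nonneg _),
      ← ENNReal.ofReal_mul (by positivity), rpow_mul_stdGaussianPDF_mul_chiSquaredPDF hm hs,
      ENNReal.ofReal_mul (pearsonTypeIIPDF_nonneg hm u)]
  have hsupport : (Function.support fun s : ℝ => ∫⁻ u : ι → ℝ,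
      ENNReal.ofReal (pearsonTypeIIPDF m u) *
        ENNReal.ofReal (chiSquaredPDF (m + Fintype.card ι) s) * F (u, s)) ⊆ Set.Ioi 0 := by
    refine Function.support_subset_iff'.2 fun s hs => ?_
    simp [chiSquaredPDF_of_nonpos _ (Set.notMem_Ioi.1 hs)]
  calc ∫⁻ p, F p ∂((stdGaussianMeasure ι).prod (chiSquaredMeasure m)).map radialSplit
      = ∫⁻ p : (ι → ℝ) × ℝ, ENNReal.ofReal (stdGaussianPDF p.1) *
          ENNReal.ofReal (chiSquaredPDF m p.2) * F (radialSplit p) := by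
        rw [lintegral_map hF measurable_radialSplit]
        exact lintegral_withDensity_prod_withDensity (by fun_prop) (by fun_prop) (by fun_prop)
    _ = ∫⁻ s in Set.Ioi (0 : ℝ), ∫⁻ u : ι → ℝ, ENNReal.ofReal (pearsonTypeIIPDF m u) *
          ENNReal.ofReal (chiSquaredPDF (m + Fintype.card ι) s) * F (u, s) := by
        rw [lintegral_eq_lintegral_sqrt_smul (by fun_prop) fun p hp => by
          simp [chiSquaredPDF_of_nonpos m hp]]
        exact setLIntegral_congr_fun measurableSet_Ioi fun s hs =>
          lintegral_congr fun u => hdensity s hs u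
    _ = ∫⁻ p, F p ∂(pearsonTypeIIMeasure ι m).prod (chiSquaredMeasure (m + Fintype.card ι)) := by
        rw [setLIntegral_eq_of_support_subset hsupport, pearsonTypeIIMeasure, chiSquaredMeasure,
          lintegral_withDensity_prod_withDensity (by fun_prop) (by fun_prop) hF,
          lintegral_prod_symm]
        fun_prop

theorem map_inv_sqrt_smul_stdGaussianMeasure_prod_chiSquaredMeasure {m : ℝ} (hm : 0 < m) :
    ((stdGaussianMeasure ι).prod (chiSquaredMeasure m)).map
        (fun p => (√(p.2 + ∑ i, p.1 i ^ 2))⁻¹ • p.1) = pearsonTypeIIMeasure ι m := by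
  have := isProbabilityMeasure_chiSquaredMeasure (m := m + Fintype.card ι) (by positivity)
  calc ((stdGaussianMeasure ι).prod (chiSquaredMeasure m)).map
        (fun p => (√(p.2 + ∑ i, p.1 i ^ 2))⁻¹ • p.1)
      = (((stdGaussianMeasure ι).prod (chiSquaredMeasure m)).map radialSplit).map Prod.fst :=
        (Measure.map_map measurable_fst measurable_radialSplit).symm
    _ = pearsonTypeIIMeasure ι m := by
        rw [map_radialSplit_stdGaussianMeasure_prod_chiSquaredMeasure hm, Measure.map_fst_prod,
          measure_univ, one_smul]

theorem tsallisScale_mul_sub_one {q : ℝ} (hq : q ≠ 1) (d : ℝ) :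
    tsallisScale q d * (q - 1) = 1 / (2 * q / (q - 1) + d) := by
  have hq' : q - 1 ≠ 0 := sub_ne_zero.2 hq
  have hfactor : 2 * q - d * (1 - q) = (2 * q / (q - 1) + d) * (q - 1) := by
    field_simp
    ring
  rw [tsallisScale, hfactor, one_div_mul_eq_div, div_mul_cancel_right₀ hq', one_div]

section LinearImage

variable [DecidableEq ι] {R : Matrix ι ι ℝ}

theorem sum_sq_inv_smul_mulVec {c : ℝ} (hc : c ≠ 0) (hR : R.det ≠ 0) (y : ι → ℝ) :
    ∑ i, ((c • R)⁻¹ *ᵥ y) i ^ 2 = (y ⬝ᵥ (R * Rᵀ)⁻¹ *ᵥ y) / c ^ 2 := by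
  have hinv : (c • R)⁻¹ = c⁻¹ • R⁻¹ := inv_smul' R (Units.mk0 c hc) hR.isUnit
  rw [hinv, smul_mulVec, sum_sq_smul, sum_sq_inv_mulVec, inv_pow, inv_mul_eq_div]

theorem abs_inv_det_sqrt_smul {K : ℝ} (hK : 0 < K) :
    |(√K • R).det⁻¹| = (1 / K) ^ ((Fintype.card ι : ℝ) / 2) / √(R * Rᵀ).det := by
  rw [det_smul, det_mul, det_transpose, sqrt_mul_self_eq_abs, abs_inv, abs_mul, abs_pow,
    abs_of_nonneg (sqrt_nonneg _), sqrt_eq_rpow, ← rpow_mul_natCast hK.le, one_div_mul_eq_div,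
    one_div, inv_rpow hK.le, mul_inv, ← div_eq_mul_inv]

theorem abs_inv_det_mul_pearsonTypeIIPDF {q m : ℝ} (hm : m = 2 * q / (q - 1)) (hm_pos : 0 < m)
    (hR : R.det ≠ 0) (y : ι → ℝ) :
    |(√(m + Fintype.card ι) • R).det⁻¹| *
        pearsonTypeIIPDF m ((√(m + Fintype.card ι) • R)⁻¹ *ᵥ y) =
      tsallisPDF q (R * Rᵀ) y := by
  have hq : q ≠ 1 := by
    rintro rfl
    simp [hm] at hm_pos
  have hq' : q - 1 ≠ 0 := sub_ne_zero.2 hq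
  have hshape : q / (q - 1) = m / 2 := by rw [hm]; ring
  have hexponent : 1 / (q - 1) = m / 2 - 1 := by rw [← hshape]; field_simp; ring
  have hexponent_ne : m / 2 - 1 ≠ 0 := hexponent ▸ one_div_ne_zero hq'
  have hK : 0 < m + Fintype.card ι := by positivity
  rw [abs_inv_det_sqrt_smul hK, pearsonTypeIIPDF, tsallisPDF, tsallisScale_mul_sub_one hq, ← hm,
    hshape, hexponent, one_div_one_div]
  simp only [Set.indicator_apply, Set.mem_ofPred_eq,
    sum_sq_inv_smul_mulVec (sqrt_pos.2 hK).ne' hR, sq_sqrt hK.le, div_lt_one hK, one_div_mul_eq_div]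
  rcases lt_trichotomy (y ⬝ᵥ (R * Rᵀ)⁻¹ *ᵥ y) (m + Fintype.card ι) with hy | hy | hy
  · rw [if_pos hy, if_pos hy.le]
    ring
  · -- On the boundary of the ellipsoid the base is `0`, and `0 ^ x = 0` for all real `x ≠ 0`,
    -- negative ones included.
    rw [if_neg hy.not_lt, if_pos hy.le, hy, div_self hK.ne', sub_self,
      zero_rpow hexponent_ne, mul_zero, mul_zero]
  · rw [if_neg hy.not_gt, if_neg hy.not_ge, mul_zero]

theorem map_mulVec_pearsonTypeIIMeasure {q m : ℝ} (hm : m = 2 * q / (q - 1)) (hm_pos : 0 < m)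
    (hR : R.det ≠ 0) :
    (pearsonTypeIIMeasure ι m).map ((√(m + Fintype.card ι) • R) *ᵥ ·) =
      tsallisMeasure q (R * Rᵀ) := by
  have hdet : (√(m + Fintype.card ι) • R).det ≠ 0 := by
    rw [det_smul]
    exact mul_ne_zero (by positivity) hR
  rw [pearsonTypeIIMeasure, map_mulVec_withDensity hdet (by fun_prop), tsallisMeasure]
  simp_rw [← ENNReal.ofReal_mul (abs_nonneg _), abs_inv_det_mul_pearsonTypeIIPDF hm hm_pos hR]

theorem tsallis_q_gt_one_stochastic_representation_general {q m : ℝ} (hm : m = 2 * q / (q - 1))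
    (hm_pos : 0 < m) {C : Matrix ι ι ℝ} (hR : R.det ≠ 0) (hRC : R * Rᵀ = C) :
    ((stdGaussianMeasure ι).prod (chiSquaredMeasure m)).map
        (fun p i => √(m + Fintype.card ι) * (R *ᵥ p.1) i / √(p.2 + ∑ j, p.1 j ^ 2)) =
      tsallisMeasure q C := by
  have hcomp : (fun (p : (ι → ℝ) × ℝ) i =>
      √(m + Fintype.card ι) * (R *ᵥ p.1) i / √(p.2 + ∑ j, p.1 j ^ 2)) =
      ((√(m + Fintype.card ι) • R) *ᵥ ·) ∘ fun p => (√(p.2 + ∑ i, p.1 i ^ 2))⁻¹ • p.1 := by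
    ext p i
    simp only [Function.comp_apply, smul_mulVec, mulVec_smul, Pi.smul_apply, smul_eq_mul]
    ring
  rw [hcomp, ← Measure.map_map (measurable_mulVec _) (by fun_prop),
    map_inv_sqrt_smul_stdGaussianMeasure_prod_chiSquaredMeasure hm_pos,
    map_mulVec_pearsonTypeIIMeasure hm hm_pos hR, hRC]

end LinearImage

/-- For `q* > 1`, `m = 2q*/(q*-1)`: `Y = √(m+n) C^{1/2} N / √(a + NᵀN)`, with `N`
standard Gaussian and `a` an independent chi-square variable with `m` degrees of
freedom, has the Tsallis density with parameter `q*` and covariance `C`. -/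
theorem tsallis_q_gt_one_stochastic_representation (n : ℕ) (hn : 1 ≤ n) (qs : ℝ)
    (hqs : 1 < qs)
    (C R : Matrix (Fin n) (Fin n) ℝ) (hCsymm : C.IsSymm) (hC : C.PosDef)
    (hRsymm : R.IsSymm) (hR : R.PosDef) (hRC : R * R = C)
    (m β Aq : ℝ) (hm : m = 2 * qs / (qs - 1))
    (hβ : β = 1 / (2 * qs - n * (1 - qs)))
    (hA : Aq = Real.Gamma (qs / (qs - 1) + n / 2) * (β * (qs - 1)) ^ ((n : ℝ) / 2) /
        (Real.Gamma (qs / (qs - 1)) * Real.pi ^ ((n : ℝ) / 2) * Real.sqrt C.det))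
    (μN : Measure (Fin n → ℝ))
    (hμN : μN = (volume : Measure (Fin n → ℝ)).withDensity fun x =>
        ENNReal.ofReal ((2 * Real.pi) ^ (-(n : ℝ) / 2) * Real.exp (-(∑ i, x i ^ 2) / 2)))
    (μa : Measure ℝ)
    (hμa : μa = (volume : Measure ℝ).withDensity fun t =>
        ENNReal.ofReal (Set.indicator (Set.Ioi (0 : ℝ))
          (fun t => t ^ (m / 2 - 1) * Real.exp (-t / 2) /
            (2 ^ (m / 2) * Real.Gamma (m / 2))) t)) :
    (μN.prod μa).map
        (fun p : (Fin n → ℝ) × ℝ => fun i =>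
          Real.sqrt (m + n) * R.mulVec p.1 i / Real.sqrt (p.2 + ∑ j, p.1 j ^ 2))
      = (volume : Measure (Fin n → ℝ)).withDensity fun y =>
          ENNReal.ofReal (Set.indicator
            {y : Fin n → ℝ | y ⬝ᵥ C⁻¹.mulVec y ≤ 1 / (β * (qs - 1))}
            (fun y => Aq * (1 - β * (qs - 1) * (y ⬝ᵥ C⁻¹.mulVec y)) ^ (1 / (qs - 1))) y) := by
  subst hβ hA hμN hμa
  simpa only [stdGaussianMeasure, stdGaussianPDF, chiSquaredMeasure, chiSquaredPDF, tsallisMeasure,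
    tsallisPDF, tsallisScale, Fintype.card_fin] using
    tsallis_q_gt_one_stochastic_representation_general hm
      (hm ▸ div_pos (by linarith) (by linarith)) hR.det_pos.ne' (hRsymm.eq.symm ▸ hRC)
end

section
/- (Poincaré's Observation) Fix n and real numbers a_i < b_i, i = 1,...,n. If X^{(p)} is uniformly distributed on the sphere of radius √p in ℝ^p, then as p → ∞, the probability P(a_i ≤ X_i^{(p)} ≤ b_i for all i = 1,...,n) converges to ∏_{i=1}^n ∫_{a_i}^{b_i} (2π)^{-1/2} e^{-x²/2} dx. -/
open MeasureTheory Real Filter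

/-!
If `g` is a standard Gaussian vector of `ℝᵖ`, then `√p • g / ‖g‖` has a rotation-invariant law on
the sphere of radius `√p`, and there is only one such probability measure: the characteristic
function of a rotation-invariant `μ` depends only on `‖t‖`, so its value at `t` is its average over
the sphere through `t` against any other candidate `ν` (rescaled), and by Fubini that average is
symmetric in `μ` and `ν`. Take the entries of `g` to be
the first `p` terms of one i.i.d. Gaussian sequence. The strong law of large numbers gives
`‖g‖ / √p → 1` almost surely, hence the first `n` coordinates of `√p • g / ‖g‖` converge almost
surely, and therefore in law, to the first `n` terms of the sequence. The boundary of a box is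
negligible for the limit law, so the probabilities of the box converge.
-/

open ProbabilityTheory Set Topology
open scoped NNReal

section RotationInvariant

variable {E : Type*} [NormedAddCommGroup E] [InnerProductSpace ℝ E] [MeasurableSpace E]

/-- A measure carried by the sphere of radius `r` about the origin and invariant under all linear
isometries. Its total mass is not normalised: the uniform distribution on the sphere is the
probability measure with this property. -/
structure IsUniformOnSphere (μ : Measure E) (r : ℝ) : Prop where
  ae_norm_eq : ∀ᵐ x ∂μ, ‖x‖ = r
  map_eq : ∀ T : E ≃ₗᵢ[ℝ] E, μ.map T = μ

variable [BorelSpace E]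

@[fun_prop]
lemma measurable_normalize : Measurable (NormedSpace.normalize : E → E) := by
  unfold NormedSpace.normalize
  fun_prop

lemma isUniformOnSphere_map_normalize {γ : Measure E} (hγ : ∀ T : E ≃ₗᵢ[ℝ] E, γ.map T = γ)
    (hne : ∀ᵐ x ∂γ, x ≠ 0) {r : ℝ} (hr : 0 ≤ r) :
    IsUniformOnSphere (γ.map fun x ↦ r • NormedSpace.normalize x) r := by
  have hmeas : Measurable fun x : E ↦ r • NormedSpace.normalize x := by fun_prop
  refine ⟨?_, fun T ↦ ?_⟩
  · rw [ae_map_iff hmeas.aemeasurable (measurableSet_eq_fun (by fun_prop) (by fun_prop))]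
    filter_upwards [hne] with x hx
    rw [norm_smul, NormedSpace.norm_normalize_eq_one_iff.2 hx, mul_one, norm_of_nonneg hr]
  · have hcomm : T ∘ (fun x ↦ r • NormedSpace.normalize x) =
        (fun x ↦ r • NormedSpace.normalize x) ∘ T := by
      ext x
      simp [NormedSpace.normalize]
    rw [Measure.map_map (by fun_prop) hmeas, hcomm, ← Measure.map_map hmeas (by fun_prop), hγ]

lemma charFun_eq_of_norm_eq [CompleteSpace E] {μ : Measure E}
    (hμ : ∀ T : E ≃ₗᵢ[ℝ] E, μ.map T = μ) {s t : E} (hst : ‖s‖ = ‖t‖) :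
    charFun μ s = charFun μ t := by
  set T := Submodule.reflection (ℝ ∙ (s - t))ᗮ
  calc charFun μ s = charFun (μ.map T) (T s) := by
        rw [charFun_apply, charFun_apply, integral_map (by fun_prop) (by fun_prop)]
        simp only [LinearIsometryEquiv.inner_map_map]
    _ = charFun μ t := by rw [hμ, Submodule.reflection_sub hst]

lemma integral_charFun_smul_comm [SecondCountableTopology E] (μ ν : Measure E) [IsFiniteMeasure μ]
    [IsFiniteMeasure ν] (c : ℝ) :
    ∫ y, charFun μ (c • y) ∂ν = ∫ x, charFun ν (c • x) ∂μ := by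
  simp_rw [charFun_apply]
  rw [integral_integral_swap]
  · simp_rw [real_inner_smul_right, real_inner_comm]
  · exact Integrable.of_bound (by fun_prop) 1
      (ae_of_all _ fun _ ↦ (Complex.norm_exp_ofReal_mul_I _).le)

lemma IsUniformOnSphere.integral_charFun_smul [CompleteSpace E] {μ ν : Measure E}
    [IsProbabilityMeasure ν] {r : ℝ} (hν : IsUniformOnSphere ν r) (hr : r ≠ 0)
    (hμ : ∀ T : E ≃ₗᵢ[ℝ] E, μ.map T = μ) (t : E) :
    ∫ y, charFun μ ((‖t‖ / r) • y) ∂ν = charFun μ t := by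
  have hae : ∀ᵐ y ∂ν, charFun μ ((‖t‖ / r) • y) = charFun μ t := by
    filter_upwards [hν.ae_norm_eq] with y rfl
    refine charFun_eq_of_norm_eq hμ ?_
    rw [norm_smul, norm_div, norm_norm, norm_norm, div_mul_cancel₀ _ hr]
  simp [integral_congr_ae hae]

theorem IsUniformOnSphere.unique [CompleteSpace E] [SecondCountableTopology E] {μ ν : Measure E}
    [IsProbabilityMeasure μ] [IsProbabilityMeasure ν] {r : ℝ} (hμ : IsUniformOnSphere μ r)
    (hν : IsUniformOnSphere ν r) (hr : r ≠ 0) : μ = ν := by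
  refine Measure.ext_of_charFun (funext fun t ↦ ?_)
  rw [← hν.integral_charFun_smul hr hμ.map_eq, integral_charFun_smul_comm,
    hμ.integral_charFun_smul hr hν.map_eq]

end RotationInvariant

section Gaussian

lemma ae_ne_zero_stdGaussian {E : Type*} [NormedAddCommGroup E] [InnerProductSpace ℝ E]
    [FiniteDimensional ℝ E] [MeasurableSpace E] [BorelSpace E] [Nontrivial E] :
    ∀ᵐ x ∂stdGaussian E, x ≠ 0 := by
  obtain ⟨v, hv⟩ := exists_ne (0 : E)
  set L : StrongDual ℝ E := innerSL ℝ v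
  have hLaw : HasLaw L (gaussianReal 0 (‖v‖ ^ 2).toNNReal) (stdGaussian E) :=
    ⟨by fun_prop, by rw [IsGaussian.map_eq_gaussianReal, integral_strongDual_stdGaussian,
      variance_dual_stdGaussian, innerSL_apply_norm]⟩
  have := nullSingletonClass_gaussianReal (μ := 0) (v := (‖v‖ ^ 2).toNNReal) (by simpa using hv)
  have hL : ∀ᵐ x ∂stdGaussian E, L x ≠ 0 :=
    (hLaw.ae_iff (p := (· ≠ 0)) (by fun_prop)).2 (Measure.ae_ne _ 0)
  filter_upwards [hL] with x hx h0
  exact hx (by simp [h0])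

lemma integral_sq_gaussianReal_zero (v : ℝ≥0) : ∫ x, x ^ 2 ∂gaussianReal 0 v = v := by
  have hvar := variance_id_gaussianReal (μ := 0) (v := v)
  rwa [variance_of_integral_eq_zero aemeasurable_id integral_id_gaussianReal] at hvar

lemma measureReal_gaussianReal_Icc (m : ℝ) {v : ℝ≥0} (hv : v ≠ 0) {a b : ℝ} (hab : a ≤ b) :
    (gaussianReal m v).real (Icc a b) = ∫ x in a..b, gaussianPDFReal m v x := by
  rw [measureReal_def, gaussianReal_apply_eq_integral m hv, integral_Icc_eq_integral_Ioc,
    ← intervalIntegral.integral_of_le hab, ENNReal.toReal_ofReal]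
  exact intervalIntegral.integral_nonneg hab fun x _ ↦ gaussianPDFReal_nonneg m v x

lemma gaussianPDFReal_zero_one (x : ℝ) :
    gaussianPDFReal 0 1 x = (2 * π) ^ (-(1 : ℝ) / 2) * exp (-x ^ 2 / 2) := by
  rw [neg_div, rpow_neg (by positivity), ← sqrt_eq_rpow]
  simp [gaussianPDFReal]

lemma measureReal_pi_gaussianReal_Icc {ι : Type*} [Fintype ι] {a b : ι → ℝ} (hab : a ≤ b) :
    (Measure.pi fun _ : ι ↦ gaussianReal 0 1).real (Icc a b) =
      ∏ i, ∫ x in a i..b i, (2 * π) ^ (-(1 : ℝ) / 2) * exp (-x ^ 2 / 2) := by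
  simp_rw [← gaussianPDFReal_zero_one, ← measureReal_gaussianReal_Icc 0 one_ne_zero (hab _),
    measureReal_def, ← pi_univ_Icc, Measure.pi_pi, ENNReal.toReal_prod]

end Gaussian

lemma measure_pi_frontier_Icc {ι α : Type*} [Fintype ι] [LinearOrder α] [TopologicalSpace α]
    [OrderClosedTopology α] [MeasurableSpace α] (ν : ι → Measure α) [∀ i, SigmaFinite (ν i)]
    [∀ i, NullSingletonClass (ν i)] (a b : ι → α) :
    Measure.pi ν (frontier (Icc a b)) = 0 := by
  have hopen : IsOpen (univ.pi fun i ↦ Ioo (a i) (b i)) :=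
    isOpen_set_pi finite_univ fun _ _ ↦ isOpen_Ioo
  have hIoo : univ.pi (fun i ↦ Ioo (a i) (b i)) ⊆ interior (Icc a b) :=
    interior_maximal ((pi_mono fun _ _ ↦ Ioo_subset_Icc_self).trans_eq (pi_univ_Icc a b)) hopen
  rw [isClosed_Icc.frontier_eq]
  exact measure_mono_null (sdiff_subset_sdiff_right hIoo)
    (ae_le_set.1 Measure.univ_pi_Ioo_ae_eq_Icc.symm.le)

section ConvergenceInDistribution

variable {ι S Ω' Ω₁' : Type*} {Ω Ω₁ : ι → Type*} [TopologicalSpace S] [MeasurableSpace S]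
  [OpensMeasurableSpace S] {l : Filter ι}
  {_ : ∀ i, MeasurableSpace (Ω i)} {μ : ∀ i, Measure (Ω i)} [∀ i, IsProbabilityMeasure (μ i)]
  {_ : MeasurableSpace Ω'} {μ' : Measure Ω'} [IsProbabilityMeasure μ']
  {X : ∀ i, Ω i → S} {Z : Ω' → S}

lemma tendstoInDistribution_of_forall_identDistrib {_ : ∀ i, MeasurableSpace (Ω₁ i)}
    {ν : ∀ i, Measure (Ω₁ i)} [∀ i, IsProbabilityMeasure (ν i)] {_ : MeasurableSpace Ω₁'}
    {ν' : Measure Ω₁'} [IsProbabilityMeasure ν'] {Y : ∀ i, Ω₁ i → S} {W : Ω₁' → S}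
    (h : TendstoInDistribution X l Z μ μ') (hXY : ∀ i, IdentDistrib (X i) (Y i) (μ i) (ν i))
    (hZW : IdentDistrib Z W μ' ν') : TendstoInDistribution Y l W ν ν' where
  forall_aemeasurable i := (hXY i).aemeasurable_snd
  aemeasurable_limit := hZW.aemeasurable_snd
  tendsto := by
    simpa only [(hXY _).map_eq, hZW.map_eq] using h.tendsto

lemma tendsto_measureReal_preimage_of_tendstoInDistribution [HasOuterApproxClosed S]
    (h : TendstoInDistribution X l Z μ μ') {s : Set S} (hs : MeasurableSet s)
    (hfrontier : μ'.map Z (frontier s) = 0) :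
    Tendsto (fun i ↦ (μ i).real (X i ⁻¹' s)) l (𝓝 ((μ'.map Z).real s)) := by
  have := Measure.isProbabilityMeasure_map h.aemeasurable_limit
  have hmap := ProbabilityMeasure.tendsto_measure_of_null_frontier_of_tendsto' h.tendsto hfrontier
  refine ((ENNReal.tendsto_toReal (measure_ne_top (μ'.map Z) s)).comp hmap).congr fun i ↦ ?_
  exact map_measureReal_apply_of_aemeasurable (h.forall_aemeasurable i) hs

end ConvergenceInDistribution

section GaussianSequence

/-- The vector of the first `p` terms of a real sequence, with the Euclidean norm. -/
def prefixVector (ξ : ℕ → ℝ) (p : ℕ) : EuclideanSpace ℝ (Fin p) :=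
  WithLp.toLp 2 fun i ↦ ξ i

/-- The first `n` coordinates of a vector of `ℝᵖ`. -/
def firstCoords {n p : ℕ} (h : n ≤ p) (x : EuclideanSpace ℝ (Fin p)) : Fin n → ℝ :=
  fun i ↦ x (Fin.castLE h i)

@[fun_prop]
lemma continuous_firstCoords {n p : ℕ} (h : n ≤ p) : Continuous (firstCoords h) := by
  unfold firstCoords
  fun_prop

lemma norm_prefixVector (ξ : ℕ → ℝ) (p : ℕ) :
    ‖prefixVector ξ p‖ = √(∑ i ∈ Finset.range p, ξ i ^ 2) := by
  simp [prefixVector, EuclideanSpace.norm_eq, Finset.sum_range]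

lemma tendsto_firstCoords_smul_normalize_prefixVector {ξ : ℕ → ℝ}
    (hξ : Tendsto (fun p : ℕ ↦ ‖prefixVector ξ p‖ / √p) atTop (𝓝 1)) (n : ℕ) :
    Tendsto (fun j : ℕ ↦ firstCoords (Nat.le_add_right n j)
        (√(n + j : ℕ) • NormedSpace.normalize (prefixVector ξ (n + j))))
      atTop (𝓝 fun i : Fin n ↦ ξ i) := by
  have hscale : Tendsto (fun j : ℕ ↦ (‖prefixVector ξ (n + j)‖ / √(n + j : ℕ))⁻¹) atTop (𝓝 1) := by
    rw [← inv_one]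
    exact (hξ.inv₀ one_ne_zero).comp (tendsto_atTop_mono (Nat.le_add_left · n) tendsto_id)
  refine tendsto_pi_nhds.2 fun i ↦ ?_
  convert hscale.mul_const (ξ i) using 2 with j
  · simp [firstCoords, NormedSpace.normalize, prefixVector, div_eq_mul_inv, mul_assoc]
  · rw [one_mul]

variable {Ω : Type*} {_ : MeasurableSpace Ω} {P : Measure Ω} {ξ : ℕ → Ω → ℝ}

lemma ae_tendsto_norm_prefixVector_div_sqrt {ν : Measure ℝ} (hlaw : ∀ i, HasLaw (ξ i) ν P)
    (hindep : Pairwise fun i j ↦ IndepFun (ξ i) (ξ j) P) (hint : Integrable (fun x ↦ x ^ 2) ν) :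
    ∀ᵐ ω ∂P, Tendsto (fun p : ℕ ↦ ‖prefixVector (ξ · ω) p‖ / √p) atTop
      (𝓝 √(∫ x, x ^ 2 ∂ν)) := by
  have hsq : Measurable fun x : ℝ ↦ x ^ 2 := by fun_prop
  have hmean : ∫ ω, ξ 0 ω ^ 2 ∂P = ∫ x, x ^ 2 ∂ν :=
    (hlaw 0).integral_comp (f := fun x ↦ x ^ 2) (by fun_prop)
  have hint₀ : Integrable (fun ω ↦ ξ 0 ω ^ 2) P := by
    rw [← (hlaw 0).map_eq] at hint
    exact hint.comp_aemeasurable (hlaw 0).aemeasurable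
  have hslln := strong_law_ae_real (fun i ω ↦ ξ i ω ^ 2) hint₀
    (fun _ _ hij ↦ (hindep hij).comp hsq hsq)
    (fun i ↦ ((hlaw i).identDistrib (hlaw 0)).comp hsq)
  rw [hmean] at hslln
  filter_upwards [hslln] with ω hω
  simpa only [norm_prefixVector, sqrt_div' _ (Nat.cast_nonneg _)] using hω.sqrt

lemma hasLaw_prefixVector_stdGaussian (hlaw : ∀ i, HasLaw (ξ i) (gaussianReal 0 1) P)
    (hindep : iIndepFun ξ P) (p : ℕ) :
    HasLaw (fun ω ↦ prefixVector (ξ · ω) p) (stdGaussian (EuclideanSpace ℝ (Fin p))) P :=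
  HasLaw.fun_comp (Y := WithLp.toLp 2) ⟨by fun_prop, map_pi_eq_stdGaussian⟩
    ((hindep.precomp Fin.val_injective).hasLaw_pi fun i ↦ hlaw i)

lemma hasLaw_smul_normalize_prefixVector (hlaw : ∀ i, HasLaw (ξ i) (gaussianReal 0 1) P)
    (hindep : iIndepFun ξ P) {p : ℕ} (hp : p ≠ 0)
    {μ : Measure (EuclideanSpace ℝ (Fin p))} [IsProbabilityMeasure μ] {r : ℝ} (hr : 0 < r)
    (hμ : IsUniformOnSphere μ r) :
    HasLaw (fun ω ↦ r • NormedSpace.normalize (prefixVector (ξ · ω) p)) μ P := by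
  have : NeZero p := ⟨hp⟩
  have hmeas : AEMeasurable (fun x : EuclideanSpace ℝ (Fin p) ↦ r • NormedSpace.normalize x)
      (stdGaussian _) := by fun_prop
  have := Measure.isProbabilityMeasure_map hmeas
  have hunif := isUniformOnSphere_map_normalize (γ := stdGaussian (EuclideanSpace ℝ (Fin p)))
    stdGaussian_map ae_ne_zero_stdGaussian hr.le
  have hnormalize : HasLaw (fun x ↦ r • NormedSpace.normalize x) μ (stdGaussian _) :=
    ⟨hmeas, hunif.unique hμ hr.ne'⟩
  exact hnormalize.comp (hasLaw_prefixVector_stdGaussian hlaw hindep p)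

end GaussianSequence

theorem tendstoInDistribution_firstCoords {n : ℕ} (hn : n ≠ 0)
    {μ : ∀ j : ℕ, Measure (EuclideanSpace ℝ (Fin (n + j)))} [∀ j, IsProbabilityMeasure (μ j)]
    (hμ : ∀ j, IsUniformOnSphere (μ j) √(n + j : ℕ)) :
    TendstoInDistribution (fun j ↦ firstCoords (Nat.le_add_right n j)) atTop id μ
      (Measure.pi fun _ : Fin n ↦ gaussianReal 0 1) := by
  obtain ⟨Ω, _, P, ξ, -, hlaw, hindep, _⟩ := exists_iid ℕ (gaussianReal 0 1)
  have hsphere (j : ℕ) : HasLaw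
      (fun ω ↦ √(n + j : ℕ) • NormedSpace.normalize (prefixVector (ξ · ω) (n + j))) (μ j) P :=
    hasLaw_smul_normalize_prefixVector hlaw hindep (by omega) (by positivity) (hμ j)
  have hcoords (j : ℕ) : HasLaw (firstCoords (Nat.le_add_right n j)) _ (μ j) := ⟨by fun_prop, rfl⟩
  have hlimit : HasLaw (fun ω (i : Fin n) ↦ ξ i ω) (Measure.pi fun _ ↦ gaussianReal 0 1) P :=
    (hindep.precomp Fin.val_injective).hasLaw_pi fun i ↦ hlaw i
  have hnorm := ae_tendsto_norm_prefixVector_div_sqrt hlaw (fun _ _ ↦ hindep.indepFun)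
    (IsGaussian.memLp_two_id).integrable_sq
  rw [integral_sq_gaussianReal_zero, NNReal.coe_one, sqrt_one] at hnorm
  have hconv := tendstoInDistribution_of_ae_tendsto
    (fun j ↦ ((hcoords j).comp (hsphere j)).aemeasurable) hlimit.aemeasurable
    (hnorm.mono fun _ hω ↦ tendsto_firstCoords_smul_normalize_prefixVector hω n)
  exact tendstoInDistribution_of_forall_identDistrib hconv
    (fun j ↦ ((hcoords j).comp (hsphere j)).identDistrib (hcoords j))
    (hlimit.identDistrib HasLaw.id)

/-- Poincaré's Observation: fix `n` and `aᵢ < bᵢ`. If `X^{(p)}` is uniformly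
distributed on the sphere of radius `√p` in `ℝ^p` (here `p = n + j`, `j → ∞`), then
`P(aᵢ ≤ Xᵢ^{(p)} ≤ bᵢ, i = 1,...,n)` converges, as `p → ∞`, to
`∏ᵢ ∫_{aᵢ}^{bᵢ} (2π)^{-1/2} e^{-x²/2} dx`. -/
theorem poincare_observation (n : ℕ) (hn : 1 ≤ n) (a b : Fin n → ℝ)
    (hab : ∀ i, a i < b i)
    (μ : ∀ j : ℕ, Measure (EuclideanSpace ℝ (Fin (n + j))))
    (hprob : ∀ j, IsProbabilityMeasure (μ j))
    (hsupp : ∀ j, (μ j) {x | ‖x‖ = Real.sqrt (n + j)}ᶜ = 0)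
    (hinv : ∀ j, ∀ T : EuclideanSpace ℝ (Fin (n + j)) ≃ₗᵢ[ℝ] EuclideanSpace ℝ (Fin (n + j)),
      (μ j).map T = μ j) :
    Tendsto (fun j : ℕ =>
        ((μ j) {x : EuclideanSpace ℝ (Fin (n + j)) |
          ∀ i : Fin n, a i ≤ x (Fin.castLE (Nat.le_add_right n j) i) ∧
            x (Fin.castLE (Nat.le_add_right n j) i) ≤ b i}).toReal)
      atTop
      (nhds (∏ i : Fin n,
        ∫ x in (a i)..(b i), (2 * Real.pi) ^ (-(1 : ℝ) / 2) * Real.exp (-x ^ 2 / 2))) := by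
  have hunif (j : ℕ) : IsUniformOnSphere (μ j) √(n + j : ℕ) :=
    ⟨by rw [Nat.cast_add]; exact hsupp j, hinv j⟩
  have := nullSingletonClass_gaussianReal (μ := 0) one_ne_zero
  have hbox := tendsto_measureReal_preimage_of_tendstoInDistribution
    (tendstoInDistribution_firstCoords (Nat.one_le_iff_ne_zero.1 hn) hunif)
    (measurableSet_Icc (a := a) (b := b)) (by rw [Measure.map_id, measure_pi_frontier_Icc])
  rw [Measure.map_id, measureReal_pi_gaussianReal_Icc fun i ↦ (hab i).le] at hbox
  exact hbox.congr fun j ↦ congrArg (μ j).real (Set.ext fun x ↦ forall_and.symm)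
end
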